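/- Let A generate an α-times resolvent family {S_α(t)}_{t≥0} on X, where 1 < α < 2, let r > 0 and let f : [0,r] → X be continuous. If the function t ↦ (S_α*f)(t) = ∫_0^t S_α(t−s)f(s) ds is continuously differentiable on [0,r], then for every t ∈ [0,r] the element (P_α*f)(t) = ∫_0^t P_α(t−s)f(s) ds belongs to D(A), A((P_α*f)(t)) = (S_α*f)'(t) − f(t), and in particular t ↦ A((P_α*f)(t)) is continuous on [0,r]. -/

import Mathlib

open MeasureTheory Set

/-- `g β t = t^(β-1)/Γ(β)`. -/
noncomputable def g (β t : ℝ) : ℝ := t ^ (β - 1) / Real.Gamma β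

/-- `Pa α S t x = (g_{α-1} * S)(t) x = ∫_0^t g_{α-1}(t-s) S(s) x ds`. -/
noncomputable def Pa {X : Type*} [NormedAddCommGroup X] [NormedSpace ℂ X]
    (α : ℝ) (S : ℝ → X →L[ℂ] X) (t : ℝ) (x : X) : X :=
  ∫ s in (0:ℝ)..t, g (α - 1) (t - s) • S s x

/-!
Write `k = g (α - 1)`, so that `a = g α` is the primitive of `k`, and put `P = k * S`,
`Q = a * S`. The resolvent equation gives `A (Q(t) x) = S(t) x - x` on `D(A)`, and on all of `X`
because `A` is closed and densely defined. By Fubini `∫_0^t P * f = (Q * f)(t)`, hence, `A` being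
closed, `A (∫_0^t P * f) = (S * f)(t) - ∫_0^t f`. Both `∫_0^t P * f` and the right side are
differentiable in `t`, and since the graph of `A` is a closed subspace it contains the derivative of
this curve, which is the claim.
-/

open Filter Topology Function
open scoped Interval

section ClosedSubmodule

variable {𝕜 E F : Type*} [NontriviallyNormedField 𝕜]
  [NormedAddCommGroup E] [NormedSpace 𝕜 E] [NormedAddCommGroup F] [NormedSpace 𝕜 F]

theorem hasDerivWithinAt_mem_of_isClosed {V : Submodule 𝕜 E} (hV : IsClosed (V : Set E))
    {u : 𝕜 → E} {u' : E} {s : Set 𝕜} {t : 𝕜} (hs : UniqueDiffWithinAt 𝕜 s t)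
    (hu : HasDerivWithinAt u u' s t) (hmem : ∀ τ ∈ s, u τ ∈ V) : u' ∈ V := by
  have hspan : (Submodule.span 𝕜 (u '' s) : Set E) ⊆ V :=
    Submodule.span_le.2 (image_subset_iff.2 hmem)
  rw [← hu.derivWithin hs]
  exact closure_minimal hspan hV <|
    range_derivWithin_subset_closure_span_image u (by rw [inter_self]; exact subset_closure)
      (mem_range_self t)

variable [NormedSpace ℝ E] [CompleteSpace E] [NormedSpace ℝ F] [CompleteSpace F]

theorem intervalIntegral_mem_of_isClosed {V : Submodule ℝ E} (hV : IsClosed (V : Set E))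
    {u : ℝ → E} {a b : ℝ} (hu : IntervalIntegrable u volume a b) (hmem : ∀ s ∈ Ι a b, u s ∈ V) :
    ∫ s in a..b, u s ∈ V := by
  have : IsClosed (V : Set E) := hV
  have hquot : V.mkQL (∫ s in a..b, u s) = 0 := by
    rw [← V.mkQL.intervalIntegral_comp_comm hu]
    refine intervalIntegral.integral_zero_ae (Eventually.of_forall fun s hs => ?_)
    simpa using hmem s hs
  simpa using hquot

theorem intervalIntegral_prodMk_mem_of_isClosed {V : Submodule ℝ (E × F)}
    (hV : IsClosed (V : Set (E × F))) {u : ℝ → E} {v : ℝ → F} {a b : ℝ}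
    (hu : IntervalIntegrable u volume a b) (hv : IntervalIntegrable v volume a b)
    (hmem : ∀ s ∈ Ι a b, (u s, v s) ∈ V) :
    (∫ s in a..b, u s, ∫ s in a..b, v s) ∈ V := by
  have huv : IntervalIntegrable (fun s => (u s, v s)) volume a b :=
    ⟨hu.1.prodMk hv.1, hu.2.prodMk hv.2⟩
  have hpair : ∫ s in a..b, (u s, v s) = (∫ s in a..b, u s, ∫ s in a..b, v s) := by
    simp only [intervalIntegral, integral_pair hu.1 hv.1, integral_pair hu.2 hv.2, Prod.mk_sub_mk]
  exact hpair ▸ intervalIntegral_mem_of_isClosed hV huv hmem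

end ClosedSubmodule

section ParametricIntegrals

variable {Y E : Type*} [TopologicalSpace Y] [NormedAddCommGroup E]

theorem exists_eventually_norm_le_of_continuous_uncurry {Z : Type*} [TopologicalSpace Z]
    {u : Y → Z → E} (hu : Continuous (uncurry u)) {K : Set Z} (hK : IsCompact K) (y₀ : Y) :
    ∃ C, ∀ᶠ y in 𝓝 y₀, ∀ z ∈ K, ‖u y z‖ ≤ C := by
  obtain ⟨C, hC⟩ := hK.exists_bound_of_continuousOn (hu.uncurry_left y₀).continuousOn
  refine ⟨C + 1, hK.eventually_forall_of_forall_eventually fun z hz => ?_⟩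
  have hlt : ‖u y₀ z‖ < C + 1 := (hC z hz).trans_lt (lt_add_one C)
  exact (hu.norm.tendsto (y₀, z)).eventually_le_const hlt

variable [NormedSpace ℝ E]

theorem continuous_intervalIntegral_smul [FirstCountableTopology Y] {k : ℝ → ℝ}
    (hk : ∀ a b, IntervalIntegrable k volume a b) {u : Y → ℝ → E}
    (hu : Continuous (uncurry u)) {b : Y → ℝ} (hb : Continuous b) :
    Continuous fun y => ∫ σ in 0..b y, k σ • u y σ := by
  refine continuous_iff_continuousAt.2 fun y₀ => ?_
  set m := min 0 (b y₀) - 1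
  set M := max 0 (b y₀) + 1
  have hm : m < 0 ∧ m < b y₀ := by grind
  have hM : 0 < M ∧ b y₀ < M := by grind
  obtain ⟨C, hC⟩ := exists_eventually_norm_le_of_continuous_uncurry hu
    (isCompact_uIcc (a := m) (b := M)) y₀
  have hprimitive :
      ContinuousAt (fun p : Y × ℝ => ∫ σ in 0..p.2, k σ • u p.1 σ) (y₀, b y₀) := by
    refine intervalIntegral.continuousAt_parametric_primitive_of_dominated
      (F := fun y σ => k σ • u y σ) (fun σ => ‖k σ‖ * C) m M (fun y => ?_) ?_
      ((hk m M).norm.mul_const C) ?_ ⟨hm.1, hM.1⟩ ⟨hm.2, hM.2⟩ Real.volume_singleton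
    · exact (hk m M).aestronglyMeasurable_restrict_uIoc.smul
        (hu.uncurry_left y).aestronglyMeasurable
    · filter_upwards [hC] with y hy
      filter_upwards [ae_restrict_mem measurableSet_uIoc] with σ hσ
      rw [norm_smul]
      exact mul_le_mul_of_nonneg_left (hy σ (uIoc_subset_uIcc hσ)) (norm_nonneg _)
    · exact Eventually.of_forall fun σ => ((hu.uncurry_right σ).const_smul (k σ)).continuousAt
  exact hprimitive.comp (f := fun y => (y, b y)) (by fun_prop)

theorem intervalIntegral_indicator_Ici {u : ℝ → E} {a b s : ℝ} (hs : s ∈ Icc a b) :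
    ∫ τ in a..b, (Ici s).indicator u τ = ∫ τ in s..b, u τ := by
  rw [intervalIntegral.integral_of_le (hs.1.trans hs.2), intervalIntegral.integral_of_le hs.2,
    ← integral_Icc_eq_integral_Ioc, ← integral_Icc_eq_integral_Ioc,
    setIntegral_indicator measurableSet_Ici, ← Ici_inter_Iic, inter_right_comm, Ici_inter_Ici,
    max_eq_right hs.1, Ici_inter_Iic]

theorem integral_integral_triangle_swap {u : ℝ → ℝ → E} {a b : ℝ} (hab : a ≤ b)
    (hu : IntegrableOn (uncurry u) (Ioc a b ×ˢ Ioc a b)) :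
    ∫ τ in a..b, ∫ s in a..τ, u τ s = ∫ s in a..b, ∫ τ in s..b, u τ s := by
  set triangle : Set (ℝ × ℝ) := {p | p.2 ≤ p.1}
  have htriangle : MeasurableSet triangle := measurableSet_le measurable_snd measurable_fst
  have hswap := intervalIntegral_intervalIntegral_swap (a := a) (b := b) (c := a) (d := b)
    (F := fun τ s => triangle.indicator (uncurry u) (τ, s))
    (by simpa only [uIoc_of_le hab] using! hu.indicator htriangle)
  have hleft : ∀ τ ∈ uIcc a b, ∫ s in a..b, triangle.indicator (uncurry u) (τ, s)
      = ∫ s in a..τ, u τ s := by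
    intro τ hτ
    rw [uIcc_of_le hab] at hτ
    exact intervalIntegral.integral_indicator hτ
  have hright : ∀ s ∈ uIcc a b, ∫ τ in a..b, triangle.indicator (uncurry u) (τ, s)
      = ∫ τ in s..b, u τ s := by
    intro s hs
    rw [uIcc_of_le hab] at hs
    exact intervalIntegral_indicator_Ici hs
  rw [intervalIntegral.integral_congr hleft, intervalIntegral.integral_congr hright] at hswap
  exact hswap

end ParametricIntegrals

section StrongContinuity

variable {𝕜 T E F : Type*} [NontriviallyNormedField 𝕜] [TopologicalSpace T]
  [WeaklyLocallyCompactSpace T]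
  [NormedAddCommGroup E] [NormedSpace 𝕜 E] [CompleteSpace E]
  [NormedAddCommGroup F] [NormedSpace 𝕜 F]

theorem continuous_uncurry_of_strongly_continuous {S : T → E →L[𝕜] F}
    (hS : ∀ x, Continuous fun t => S t x) : Continuous (uncurry fun t => ⇑(S t)) := by
  refine continuous_iff_continuousAt.2 fun ⟨t₀, x₀⟩ => ?_
  obtain ⟨K, hK, hKt₀⟩ := exists_compact_mem_nhds t₀
  obtain ⟨C, hC⟩ : ∃ C, ∀ t : K, ‖S t‖ ≤ C := banach_steinhaus fun x =>
    (hK.exists_bound_of_continuousOn (hS x).continuousOn).imp fun _ h t => h t t.2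
  have hlip : ∀ t ∈ K, LipschitzOnWith C.toNNReal (S t) univ := fun t ht =>
    ((S t).lipschitz.weaken (NNReal.le_toNNReal_of_coe_le (hC ⟨t, ht⟩))).lipschitzOnWith
  have hcont : ContinuousOn (uncurry fun t => ⇑(S t)) (K ×ˢ univ) :=
    continuousOn_prod_of_continuousOn_lipschitzOnWith' _ C.toNNReal hlip
      fun x _ => (hS x).continuousOn
  exact hcont.continuousAt (prod_mem_nhds hKt₀ univ_mem)

end StrongContinuity

section CausalConvolution

variable {E F : Type*} [NormedAddCommGroup F] [NormedSpace ℝ F]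

/-- The convolution `(T * f)(t) = ∫_0^t T(t - s) f(s) ds` on the half-line of a family `T` of maps
with a function `f`. The maps `T σ` are not assumed linear, and scalar kernels are the case
`T σ = (k σ • ·)`. -/
noncomputable def causalConv (T : ℝ → E → F) (f : ℝ → E) (t : ℝ) : F :=
  ∫ s in 0..t, T (t - s) (f s)

/-- The family `(k * S)(t) x = ∫_0^t k(t - s) S(s) x ds` obtained by convolving a scalar kernel `k`
with a family of maps `S`; `Pa α S` is the case `k = g (α - 1)`. -/
noncomputable def kernelConv (k : ℝ → ℝ) (S : ℝ → E → F) (t : ℝ) (x : E) : F :=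
  causalConv (fun σ y => k σ • y) (fun s => S s x) t

theorem causalConv_congr {T T' : ℝ → E → F} {f f' : ℝ → E} {t : ℝ} (ht : 0 ≤ t)
    (hT : EqOn T T' (Icc 0 t)) (hf : EqOn f f' (Icc 0 t)) :
    causalConv T f t = causalConv T' f' t := by
  refine intervalIntegral.integral_congr fun s hs => ?_
  rw [uIcc_of_le ht] at hs
  rw [hT ⟨sub_nonneg.2 hs.2, sub_le_self t hs.1⟩, hf hs]

theorem kernelConv_congr {k : ℝ → ℝ} {S S' : ℝ → E → F} {t : ℝ} (ht : 0 ≤ t)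
    (hS : EqOn S S' (Icc 0 t)) : kernelConv k S t = kernelConv k S' t :=
  funext fun x => causalConv_congr ht (eqOn_refl _ _) fun _ hs => congrFun (hS hs) x

theorem continuous_causalConv [TopologicalSpace E] {T : ℝ → E → F} (hT : Continuous (uncurry T))
    {f : ℝ → E} (hf : Continuous f) : Continuous (causalConv T f) := by
  have hu : Continuous (uncurry fun t s : ℝ => T (t - s) (f s)) :=
    hT.comp (f := fun p : ℝ × ℝ => (p.1 - p.2, f p.2)) (by fun_prop)
  exact intervalIntegral.continuous_parametric_intervalIntegral_of_continuous hu continuous_id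

theorem continuous_uncurry_kernelConv [TopologicalSpace E] [FirstCountableTopology E] {k : ℝ → ℝ}
    (hk : ∀ a b, IntervalIntegrable k volume a b) {S : ℝ → E → F} (hS : Continuous (uncurry S)) :
    Continuous (uncurry (kernelConv k S)) := by
  have hflip : uncurry (kernelConv k S)
      = fun p : ℝ × E => ∫ σ in 0..p.1, k σ • S (p.1 - σ) p.2 := by
    ext ⟨t, x⟩
    have h := intervalIntegral.integral_comp_sub_left (a := 0) (b := t)
      (fun σ => k σ • S (t - σ) x) t
    simpa only [sub_sub_cancel, sub_self, sub_zero] using! h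
  rw [hflip]
  exact continuous_intervalIntegral_smul (u := fun (p : ℝ × E) σ => S (p.1 - σ) p.2) hk
    (hS.comp (f := fun q : (ℝ × E) × ℝ => (q.1.1 - q.2, q.1.2)) (by fun_prop)) continuous_fst

theorem integral_causalConv {T : ℝ → E → F} {f : ℝ → E} {t : ℝ} (ht : 0 ≤ t)
    (hTf : IntegrableOn (fun p : ℝ × ℝ => T (p.1 - p.2) (f p.2)) (Ioc 0 t ×ˢ Ioc 0 t)) :
    ∫ τ in 0..t, causalConv T f τ
      = causalConv (fun σ x => ∫ τ in 0..σ, T τ x) f t := by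
  refine (integral_integral_triangle_swap (u := fun τ s => T (τ - s) (f s)) ht hTf).trans ?_
  refine intervalIntegral.integral_congr fun s _ => ?_
  simpa only [sub_self] using
    intervalIntegral.integral_comp_sub_right (a := s) (b := t) (fun σ => T σ (f s)) s

theorem integrableOn_sub_smul {k : ℝ → ℝ} (hk : ∀ a b, IntervalIntegrable k volume a b)
    {u : ℝ → F} (hu : Continuous u) (t : ℝ) :
    IntegrableOn (fun p : ℝ × ℝ => k (p.1 - p.2) • u p.2) (Ioc 0 t ×ˢ Ioc 0 t) := by
  have hsquare : IntegrableOn (fun p : ℝ × ℝ => k p.1 • u p.2) (Ioc (-t) t ×ˢ Ioc 0 t) := by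
    rw [IntegrableOn, Measure.volume_eq_prod, ← Measure.prod_restrict]
    exact (hk (-t) t).1.smul_prod (hu.intervalIntegrable 0 t).1
  have hshear : MeasurePreserving (fun p : ℝ × ℝ => (p.1 - p.2, p.2)) :=
    measurePreserving_sub_prod volume volume
  refine IntegrableOn.mono_set ((hshear.restrict_preimage
    (measurableSet_Ioc.prod measurableSet_Ioc)).integrable_comp_of_integrable hsquare) ?_
  rintro ⟨τ, s⟩ ⟨⟨hτ0, hτt⟩, hs0, hst⟩
  exact ⟨⟨by linarith, by linarith⟩, hs0, hst⟩

variable [CompleteSpace F]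

theorem integral_kernelConv {k : ℝ → ℝ} (hk : ∀ a b, IntervalIntegrable k volume a b)
    {S : ℝ → E → F} {x : E} (hS : Continuous fun s => S s x) {t : ℝ} (ht : 0 ≤ t) :
    ∫ τ in 0..t, kernelConv k S τ x
      = kernelConv (fun σ => ∫ τ in 0..σ, k τ) S t x := by
  refine (integral_causalConv ht (integrableOn_sub_smul hk hS t)).trans ?_
  simp only [kernelConv, intervalIntegral.integral_smul_const]

theorem integral_causalConv_kernelConv [TopologicalSpace E] [FirstCountableTopology E] {k : ℝ → ℝ}
    (hk : ∀ a b, IntervalIntegrable k volume a b) {S : ℝ → E → F} (hS : Continuous (uncurry S))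
    {f : ℝ → E} (hf : Continuous f) {t : ℝ} (ht : 0 ≤ t) :
    ∫ τ in 0..t, causalConv (kernelConv k S) f τ
      = causalConv (kernelConv (fun σ => ∫ τ in 0..σ, k τ) S) f t := by
  have hcont : Continuous fun p : ℝ × ℝ => kernelConv k S (p.1 - p.2) (f p.2) :=
    (continuous_uncurry_kernelConv hk hS).comp (f := fun p : ℝ × ℝ => (p.1 - p.2, f p.2))
      (by fun_prop)
  rw [integral_causalConv ht ((hcont.continuousOn.integrableOn_compact
    (isCompact_Icc.prod isCompact_Icc)).mono_set
    (prod_mono Ioc_subset_Icc_self Ioc_subset_Icc_self))]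
  exact causalConv_congr ht
    (fun σ hσ => funext fun x => integral_kernelConv hk (hS.uncurry_right x) hσ.1) (eqOn_refl _ _)

end CausalConvolution

section FractionalKernel

variable {β : ℝ} (hβ : 0 < β)
include hβ

theorem intervalIntegrable_g (a b : ℝ) : IntervalIntegrable (g β) volume a b :=
  (intervalIntegral.intervalIntegrable_rpow' (by linarith)).div_const _

theorem integral_g (t : ℝ) : ∫ s in 0..t, g β s = g (β + 1) t := by
  simp only [g]
  rw [intervalIntegral.integral_div, integral_rpow (Or.inl (by linarith)),
    Real.Gamma_add_one hβ.ne', sub_add_cancel, add_sub_cancel_right, Real.zero_rpow hβ.ne',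
    sub_zero, div_div]

end FractionalKernel

section Resolvent

variable {𝕜 X : Type*} [NormedAddCommGroup X] [NormedSpace ℝ X] [CompleteSpace X]

section ClosedRelation

variable {V : Submodule ℝ (X × X)} (hV : IsClosed (V : Set (X × X)))
  {k : ℝ → ℝ} (hk : ∀ a b, IntervalIntegrable k volume a b)
  {S : ℝ → X → X} (hS : Continuous (uncurry S))
  (hSV : ∀ t, 0 ≤ t → ∀ x, (kernelConv (fun σ => ∫ τ in 0..σ, k τ) S t x, S t x - x) ∈ V)
  {f : ℝ → X} (hf : Continuous f) {t : ℝ}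
include hV hk hS hSV hf

theorem integral_causalConv_kernelConv_mem (ht : 0 ≤ t) :
    (∫ τ in 0..t, causalConv (kernelConv k S) f τ,
      causalConv S f t - ∫ s in 0..t, f s) ∈ V := by
  have hprimitive : Continuous fun σ => ∫ τ in 0..σ, k τ :=
    intervalIntegral.continuous_primitive hk 0
  have hshift : Continuous fun s => (t - s, f s) := by fun_prop
  have hSf : Continuous fun s => S (t - s) (f s) := hS.comp hshift
  have hQf := (continuous_uncurry_kernelConv hprimitive.intervalIntegrable hS).comp hshift
  have hmem : ∀ s ∈ Ι 0 t, (kernelConv (fun σ => ∫ τ in 0..σ, k τ) S (t - s) (f s),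
      S (t - s) (f s) - f s) ∈ V := by
    intro s hs
    rw [uIoc_of_le ht] at hs
    exact hSV _ (sub_nonneg.2 hs.2) _
  rw [integral_causalConv_kernelConv hk hS hf ht, causalConv, causalConv,
    ← intervalIntegral.integral_sub (hSf.intervalIntegrable 0 t) (hf.intervalIntegrable 0 t)]
  exact intervalIntegral_prodMk_mem_of_isClosed hV (hQf.intervalIntegrable 0 t)
    ((hSf.sub hf).intervalIntegrable 0 t) hmem

theorem causalConv_kernelConv_mem_of_hasDerivWithinAt {r : ℝ} (hr : 0 < r) (ht : t ∈ Icc 0 r)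
    {d : X} (hd : HasDerivWithinAt (causalConv S f) d (Icc 0 r) t) :
    (causalConv (kernelConv k S) f t, d - f t) ∈ V := by
  have hPf : Continuous (causalConv (kernelConv k S) f) :=
    continuous_causalConv (continuous_uncurry_kernelConv hk hS) hf
  have hderiv : HasDerivWithinAt (fun τ => (∫ s in 0..τ, causalConv (kernelConv k S) f s,
      causalConv S f τ - ∫ s in 0..τ, f s))
      (causalConv (kernelConv k S) f t, d - f t) (Icc 0 r) t :=
    (hPf.integral_hasStrictDerivAt 0 t).hasDerivAt.hasDerivWithinAt.prodMk
      (hd.sub (hf.integral_hasStrictDerivAt 0 t).hasDerivAt.hasDerivWithinAt)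
  exact hasDerivWithinAt_mem_of_isClosed hV (uniqueDiffOn_Icc hr t ht) hderiv fun τ hτ =>
    integral_causalConv_kernelConv_mem hV hk hS hSV hf hτ.1

end ClosedRelation

variable [RCLike 𝕜] [NormedSpace 𝕜 X] [IsScalarTower ℝ 𝕜 X]

theorem kernelConv_mem_graph {a : ℝ → ℝ} (ha : ∀ b c, IntervalIntegrable a volume b c)
    {A : X →ₗ.[𝕜] X} (hA_closed : IsClosed (A.graph : Set (X × X)))
    (hA_dense : Dense (A.domain : Set X)) {S : ℝ → X →L[𝕜] X}
    (hS_cont : ∀ x, Continuous fun t => S t x) {t : ℝ} (ht : 0 ≤ t)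
    (hS_comm : ∀ s ∈ Icc 0 t, ∀ x y, (x, y) ∈ A.graph → (S s x, S s y) ∈ A.graph)
    (hS_eq : ∀ x y, (x, y) ∈ A.graph → S t x = x + kernelConv a (fun s => S s) t y) (x : X) :
    (kernelConv a (fun s => S s) t x, S t x - x) ∈ A.graph := by
  have hcont : Continuous (kernelConv a (fun s => S s) t) :=
    (continuous_uncurry_kernelConv ha
      (continuous_uncurry_of_strongly_continuous hS_cont)).uncurry_left t
  have hclosed : IsClosed {x | (kernelConv a (fun s => S s) t x, S t x - x) ∈ A.graph} :=
    hA_closed.preimage (hcont.prodMk ((S t).continuous.sub continuous_id))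
  refine hclosed.closure_subset_iff.2 (fun x hx => ?_) (hA_dense x)
  have hAx : (x, A ⟨x, hx⟩) ∈ A.graph := A.mem_graph ⟨x, hx⟩
  have hint : ∀ y, IntervalIntegrable (fun s => a (t - s) • S s y) volume 0 t := fun y =>
    (by simpa using (ha t 0).comp_sub_left t : IntervalIntegrable _ volume 0 t).smul_continuousOn
      (hS_cont y).continuousOn
  rw [mem_ofPred_eq, sub_eq_of_eq_add' (hS_eq x _ hAx)]
  refine intervalIntegral_prodMk_mem_of_isClosed (V := A.graph.restrictScalars ℝ) hA_closed
    (hint _) (hint _) fun s hs => ?_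
  rw [uIoc_of_le ht] at hs
  exact A.graph.smul_of_tower_mem (a (t - s)) (hS_comm s (Ioc_subset_Icc_self hs) x _ hAx)

end Resolvent

theorem stmt_11_general
    {𝕜 X : Type*} [RCLike 𝕜] [NormedAddCommGroup X] [NormedSpace ℝ X] [CompleteSpace X]
    [NormedSpace 𝕜 X] [IsScalarTower ℝ 𝕜 X]
    {k a : ℝ → ℝ} (hk : ∀ b c, IntervalIntegrable k volume b c)
    (ha : ∀ t, ∫ τ in 0..t, k τ = a t)
    {A : X →ₗ.[𝕜] X} (hA_closed : IsClosed (A.graph : Set (X × X)))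
    (hA_dense : Dense (A.domain : Set X)) {S : ℝ → X →L[𝕜] X}
    (hS_cont : ∀ x, ContinuousOn (fun t => S t x) (Ici 0))
    (hS_comm : ∀ t, 0 ≤ t → ∀ x y, (x, y) ∈ A.graph → (S t x, S t y) ∈ A.graph)
    (hS_eq : ∀ t, 0 ≤ t → ∀ x y, (x, y) ∈ A.graph →
      S t x = x + ∫ s in 0..t, a (t - s) • S s y)
    {r : ℝ} (hr : 0 < r) {f : ℝ → X} (hf : ContinuousOn f (Icc 0 r)) {t : ℝ} (ht : t ∈ Icc 0 r)
    {d : X}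
    (hd : HasDerivWithinAt (fun τ => ∫ s in 0..τ, S (τ - s) (f s)) d (Icc 0 r) t) :
    (∫ s in 0..t, ∫ σ in 0..t - s, k (t - s - σ) • S σ (f s), d - f t) ∈ A.graph := by
  obtain rfl : (fun t => ∫ τ in 0..t, k τ) = a := funext ha
  -- Only the values of `S` on `[0, ∞)` and of `f` on `[0, r]` matter, so both may be extended.
  set S' : ℝ → X →L[𝕜] X := fun t => S (max t 0)
  set f' : ℝ → X := IccExtend hr.le ((Icc 0 r).domRestrict f) with hf'
  have hS'_eq : ∀ τ, 0 ≤ τ → S' τ = S τ := fun τ hτ => congrArg S (max_eq_left hτ)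
  have hSS' : ∀ τ, EqOn (fun s => ⇑(S s)) (fun s => S' s) (Icc 0 τ) := fun τ s hs =>
    congrArg _ (hS'_eq s hs.1).symm
  have hff' : EqOn f f' (Icc 0 r) := fun s hs => by
    simp only [hf', IccExtend_of_mem hr.le _ hs, domRestrict_apply]
  have hS'_cont : ∀ x, Continuous fun t => S' t x := fun x =>
    (hS_cont x).comp_continuous (by fun_prop) fun t => le_max_right t 0
  have hf'_cont : Continuous f' := hf.domRestrict.Icc_extend'
  have hS'_graph : ∀ τ, 0 ≤ τ → ∀ x,
      (kernelConv (fun σ => ∫ ρ in 0..σ, k ρ) (fun s => S' s) τ x, S' τ x - x) ∈ A.graph := by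
    refine fun τ hτ => kernelConv_mem_graph
      (intervalIntegral.continuous_primitive hk 0).intervalIntegrable hA_closed hA_dense
      hS'_cont hτ (fun s _ => hS_comm _ (le_max_right s 0)) fun x y hxy => ?_
    rw [← kernelConv_congr hτ (hSS' τ), hS'_eq τ hτ]
    exact hS_eq τ hτ x y hxy
  have hconv : EqOn (causalConv (fun s => S' s) f') (causalConv (fun s => S s) f) (Icc 0 r) :=
    fun τ hτ => (causalConv_congr hτ.1 (hSS' τ) (hff'.mono (Icc_subset_Icc_right hτ.2))).symm
  have hmem := causalConv_kernelConv_mem_of_hasDerivWithinAt (V := A.graph.restrictScalars ℝ)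
    hA_closed hk (continuous_uncurry_of_strongly_continuous hS'_cont) hS'_graph hf'_cont hr ht
    (hd.congr hconv (hconv ht))
  rw [← hff' ht, ← causalConv_congr ht.1 (fun σ hσ => kernelConv_congr hσ.1 (hSS' σ))
    (hff'.mono (Icc_subset_Icc_right ht.2))] at hmem
  exact hmem

theorem stmt_11
    {X : Type*} [NormedAddCommGroup X] [NormedSpace ℂ X] [CompleteSpace X]
    (α : ℝ) (hα1 : 1 < α) (hα2 : α < 2)
    (A : X →ₗ.[ℂ] X) (hA_closed : IsClosed (A.graph : Set (X × X)))
    (hA_dense : Dense (A.domain : Set X))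
    (S : ℝ → X →L[ℂ] X)
    (hS_cont : ∀ x : X, ContinuousOn (fun t => S t x) (Ici (0:ℝ)))
    (hS_zero : S 0 = 1)
    (hS_dom : ∀ t : ℝ, 0 ≤ t → ∀ x ∈ A.domain, S t x ∈ A.domain)
    (hS_comm : ∀ t : ℝ, 0 ≤ t → ∀ x y : X, (x, y) ∈ A.graph → (S t x, S t y) ∈ A.graph)
    (hS_eq : ∀ t : ℝ, 0 ≤ t → ∀ x y : X, (x, y) ∈ A.graph →
      S t x = x + ∫ s in (0:ℝ)..t, g α (t - s) • S s y)
    (r : ℝ) (hr : 0 < r) (f : ℝ → X) (hf : ContinuousOn f (Icc 0 r))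
    (D : ℝ → X) (hD_cont : ContinuousOn D (Icc 0 r))
    (hD : ∀ t ∈ Icc (0:ℝ) r,
      HasDerivWithinAt (fun τ => ∫ s in (0:ℝ)..τ, S (τ - s) (f s)) (D t) (Icc 0 r) t) :
    (∀ t ∈ Icc (0:ℝ) r,
      ((∫ s in (0:ℝ)..t, Pa α S (t - s) (f s)), D t - f t) ∈ A.graph) ∧
    ContinuousOn (fun t => D t - f t) (Icc 0 r) := by
  have hβ : 0 < α - 1 := sub_pos.2 hα1
  exact ⟨fun t ht => stmt_11_general (intervalIntegrable_g hβ) (by simpa using integral_g hβ)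
    hA_closed hA_dense hS_cont hS_comm hS_eq hr hf ht (hD t ht), hD_cont.sub hf⟩
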